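/- For every integer d ≥ 1 and every integer n ≥ 1 there exists a d-union-free family 𝓕 of subsets of [n] with |𝓕| ≥ (1/2)·(1 + 1/(16 d²))^n. -/

import Mathlib

/-!
Words of length `k = ⌊n / (4 d)⌋` over an alphabet of size `4 d` are encoded by their graphs, which
are `k`-subsets of a set of size `4 d k`; two graphs meet in as many points as the words agree. If
any two distinct words of a code agree in fewer than `k / d` positions, then `d` other graphs cannot
cover a given one. A Gilbert–Varshamov selection produces such a code of size at least
`exp (k / (2 d))`: by the exponential Markov inequality, at most a fraction `exp (-k / (2 d))` of
all words agree with a given word in `k / d` or more positions.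
-/

open Finset

section CoverFree

variable {V : Type*} [DecidableEq V] {d : ℕ} {𝓕 𝓖 𝓗 : Finset (Finset V)}

/-- A family of finite sets is `d`-cover-free if no member is contained in the union of between one
and `d` other members. Empty unions are left out so that the family `{∅}` qualifies. -/
def IsCoverFree (d : ℕ) (𝓕 : Finset (Finset V)) : Prop :=
  ∀ A ∈ 𝓕, ∀ 𝓑 ⊆ 𝓕, 𝓑.Nonempty → #𝓑 ≤ d → A ⊆ 𝓑.sup id → A ∈ 𝓑

theorem isCoverFree_of_mul_card_inter_lt
    (h : (𝓕 : Set (Finset V)).Pairwise fun A B ↦ d * #(A ∩ B) < #A) : IsCoverFree d 𝓕 := by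
  intro A hA 𝓑 h𝓑 hne hcard hcover
  by_contra hA𝓑
  have hA_le : #A ≤ ∑ B ∈ 𝓑, #(A ∩ B) := by
    calc #A = #(𝓑.biUnion (A ∩ ·)) := by
          rw [← inter_biUnion, ← sup_eq_biUnion]
          exact congrArg card (inter_eq_left.2 hcover).symm
      _ ≤ ∑ B ∈ 𝓑, #(A ∩ B) := card_biUnion_le
  have hlt : d * #A < d * #A := by
    calc d * #A ≤ ∑ B ∈ 𝓑, d * #(A ∩ B) := by rw [← mul_sum]; gcongr
      _ < ∑ _B ∈ 𝓑, #A := sum_lt_sum_of_nonempty hne fun B hB ↦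
          h hA (h𝓑 hB) (ne_of_mem_of_not_mem hB hA𝓑).symm
      _ = #𝓑 * #A := by rw [sum_const, smul_eq_mul]
      _ ≤ d * #A := by gcongr
  exact hlt.false

namespace IsCoverFree

theorem subset_of_sup_subset (h : IsCoverFree d 𝓕) (h𝓖 : 𝓖 ⊆ 𝓕) (h𝓗 : 𝓗 ⊆ 𝓕)
    (hne : 𝓗.Nonempty) (hcard : #𝓗 ≤ d) (hsup : 𝓖.sup id ⊆ 𝓗.sup id) : 𝓖 ⊆ 𝓗 :=
  fun A hA ↦ h A (h𝓖 hA) 𝓗 h𝓗 hne hcard ((le_sup (f := id) hA).trans hsup)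

theorem image_eq_image_of_sup_eq {ι κ : Type*} [Fintype ι] [Fintype κ] [Nonempty ι] [Nonempty κ]
    (h : IsCoverFree d 𝓕) (hι : Fintype.card ι ≤ d) (hκ : Fintype.card κ ≤ d)
    {G : ι → Finset V} {H : κ → Finset V} (hG : ∀ i, G i ∈ 𝓕) (hH : ∀ j, H j ∈ 𝓕)
    (hsup : univ.sup G = univ.sup H) : univ.image G = univ.image H := by
  have hG𝓕 : univ.image G ⊆ 𝓕 := image_subset_iff.2 fun i _ ↦ hG i
  have hH𝓕 : univ.image H ⊆ 𝓕 := image_subset_iff.2 fun j _ ↦ hH j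
  have hsup' : (univ.image G).sup id = (univ.image H).sup id := by
    simpa only [sup_image, Function.id_comp] using hsup
  exact Subset.antisymm
    (h.subset_of_sup_subset hG𝓕 hH𝓕 (univ_nonempty.image H) (card_image_le.trans hκ) hsup'.le)
    (h.subset_of_sup_subset hH𝓕 hG𝓕 (univ_nonempty.image G) (card_image_le.trans hι) hsup'.ge)

end IsCoverFree

end CoverFree

section GilbertVarshamov

open scoped SetRel

theorem exists_isSeparated_card_le_card_mul {X 𝕜 : Type*} [Fintype X] [Semiring 𝕜] [PartialOrder 𝕜]
    [IsOrderedRing 𝕜] (R : SetRel X X) [R.IsRefl] [R.IsSymm] [∀ y, DecidablePred (· ~[R] y)]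
    {b : 𝕜} (hb : ∀ y, (#{x | x ~[R] y} : 𝕜) ≤ b) :
    ∃ C : Finset X, R.IsSeparated (C : Set X) ∧ (Fintype.card X : 𝕜) ≤ #C * b := by
  classical
  obtain ⟨N, -, hN⟩ := Finite.exists_le_maximal (p := fun N ↦ N ⊆ Set.univ ∧ R.IsSeparated N)
    ⟨Set.empty_subset _, Set.pairwise_empty _⟩
  lift N to Finset X using N.toFinite
  refine ⟨N, hN.prop.2, ?_⟩
  have hcover : univ ⊆ N.biUnion fun y ↦ {x | x ~[R] y} := fun x _ ↦ by
    simpa using SetRel.IsCover.of_maximal_isSeparated hN (Set.mem_univ x)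
  calc (Fintype.card X : 𝕜) ≤ ∑ y ∈ N, (#{x | x ~[R] y} : 𝕜) := by
        rw [← card_univ, ← Nat.cast_sum]
        exact Nat.mono_cast ((card_le_card hcover).trans card_biUnion_le)
    _ ≤ #N * b := by simpa only [nsmul_eq_mul] using sum_le_card_nsmul N _ b fun y _ ↦ hb y

end GilbertVarshamov

section Agreement

variable {ι α : Type*} [Fintype ι] [DecidableEq α]

/-- The number of positions in which two words agree; `hammingDist` counts the other positions. -/
def agreement (f g : ι → α) : ℕ := #{i | f i = g i}

theorem agreement_self (f : ι → α) : agreement f f = Fintype.card ι := by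
  simp [agreement]

theorem agreement_comm (f g : ι → α) : agreement f g = agreement g f := by
  simp only [agreement, eq_comm]

variable [Fintype α]

theorem sum_pow_agreement [DecidableEq ι] {R : Type*} [CommRing R] (x : R) (g : ι → α) :
    ∑ f : ι → α, x ^ agreement f g = (x + (Fintype.card α - 1)) ^ Fintype.card ι := by
  have hletter (i : ι) : ∑ a, (if a = g i then x else 1) = x + (Fintype.card α - 1) := by
    rw [sum_ite, filter_eq', if_pos (mem_univ _), filter_ne']
    simp [Nat.cast_sub (Fintype.card_pos_iff.2 ⟨g i⟩)]
  calc ∑ f : ι → α, x ^ agreement f g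
      = ∑ f : ι → α, ∏ i, (if f i = g i then x else 1) := by simp [agreement, prod_ite]
    _ = ∏ i, ∑ a, (if a = g i then x else 1) :=
      (Fintype.prod_sum fun i a ↦ if a = g i then x else 1).symm
    _ = (x + (Fintype.card α - 1)) ^ Fintype.card ι := by simp [hletter]

theorem card_le_agreement_mul_exp_le [DecidableEq ι] (t : ℝ) (g : ι → α) :
    #{f : ι → α | t ≤ agreement f g} * Real.exp t ≤
      (Real.exp 1 + (Fintype.card α - 1)) ^ Fintype.card ι := by
  calc #{f : ι → α | t ≤ agreement f g} * Real.exp t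
      ≤ ∑ f : ι → α with t ≤ agreement f g, Real.exp 1 ^ agreement f g := by
        rw [← nsmul_eq_mul]
        refine card_nsmul_le_sum _ _ _ fun f hf ↦ ?_
        rw [← Real.exp_nat_mul, mul_one]
        exact Real.exp_le_exp.2 (mem_filter.1 hf).2
    _ ≤ ∑ f : ι → α, Real.exp 1 ^ agreement f g :=
        sum_le_sum_of_subset_of_nonneg (filter_subset _ _) fun _ _ _ ↦ by positivity
    _ = (Real.exp 1 + (Fintype.card α - 1)) ^ Fintype.card ι := sum_pow_agreement _ g

theorem exp_one_add_sub_one_pow_le {q : ℝ} (hq : 0 < q) (k : ℕ) :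
    (Real.exp 1 + (q - 1)) ^ k ≤ q ^ k * Real.exp (2 * k / q) := by
  have hbase : Real.exp 1 + (q - 1) ≤ q * Real.exp (2 / q) := by
    calc Real.exp 1 + (q - 1) ≤ q * (2 / q + 1) := by
          rw [mul_add, mul_div_cancel₀ _ (by positivity)]
          linarith [Real.exp_one_lt_three]
      _ ≤ q * Real.exp (2 / q) := by gcongr; exact Real.add_one_le_exp _
  calc (Real.exp 1 + (q - 1)) ^ k ≤ (q * Real.exp (2 / q)) ^ k := by
        refine pow_le_pow_left₀ ?_ hbase k
        linarith [Real.add_one_le_exp 1]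
    _ = q ^ k * Real.exp (2 * k / q) := by
        rw [mul_pow, ← Real.exp_nat_mul, mul_div_assoc', mul_comm (k : ℝ)]

theorem exists_code_agreement_lt [Nonempty α] {t : ℝ} (ht : t ≤ Fintype.card ι) :
    ∃ C : Finset (ι → α),
      (C : Set (ι → α)).Pairwise (fun f g ↦ (agreement f g : ℝ) < t) ∧
      Real.exp (t - 2 * Fintype.card ι / Fintype.card α) ≤ #C := by
  classical
  set k := Fintype.card ι
  set q := Fintype.card α
  have hq : (0 : ℝ) < q := by exact_mod_cast Fintype.card_pos (α := α)
  let R : SetRel (ι → α) (ι → α) := {p | t ≤ agreement p.1 p.2}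
  have : R.IsRefl := ⟨fun f ↦ by simpa [R, agreement_self] using ht⟩
  have : R.IsSymm := ⟨fun f g h ↦ by simpa [R, agreement_comm] using h⟩
  have hball (g : ι → α) :
      (#{f : ι → α | t ≤ agreement f g} : ℝ) ≤ q ^ k * Real.exp (2 * k / q) / Real.exp t :=
    (le_div_iff₀ (Real.exp_pos t)).2 <|
      (card_le_agreement_mul_exp_le t g).trans (exp_one_add_sub_one_pow_le hq k)
  obtain ⟨C, hsep, hcard⟩ := exists_isSeparated_card_le_card_mul R hball
  refine ⟨C, hsep.imp fun _ _ h ↦ not_le.1 h, ?_⟩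
  have hq_pow : (0 : ℝ) < q ^ k := by positivity
  have hcancel : (q : ℝ) ^ k * 1 ≤ q ^ k * (#C * (Real.exp (2 * k / q) / Real.exp t)) := by
    calc (q : ℝ) ^ k * 1 = Fintype.card (ι → α) := by simp [k, q]
      _ ≤ #C * (q ^ k * Real.exp (2 * k / q) / Real.exp t) := hcard
      _ = q ^ k * (#C * (Real.exp (2 * k / q) / Real.exp t)) := by ring
  have hone := le_of_mul_le_mul_left hcancel hq_pow
  rwa [← Real.exp_sub, ← div_le_iff₀ (Real.exp_pos _), one_div, ← Real.exp_neg, neg_sub] at hone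

end Agreement

section WordGraph

variable {ι α : Type*} [Fintype ι] [Fintype α] [DecidableEq α]

/-- The graph of a word `f : ι → α` as a finite set of pairs (position, letter): the set by which
the word is represented in the cover-free family. -/
def wordGraph (f : ι → α) : Finset (ι × α) := {p | f p.1 = p.2}

theorem wordGraph_injective : Function.Injective (wordGraph : (ι → α) → Finset (ι × α)) := by
  intro f g h
  funext i
  have hmem : (i, f i) ∈ wordGraph g := h ▸ by simp [wordGraph]
  simpa [wordGraph, eq_comm] using hmem

theorem card_wordGraph_inter [DecidableEq ι] (f g : ι → α) :
    #(wordGraph f ∩ wordGraph g) = agreement f g := by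
  refine (card_nbij' (fun i ↦ (i, f i)) Prod.fst ?_ ?_ ?_ ?_).symm <;>
    simp +contextual [Set.MapsTo, Set.LeftInvOn, wordGraph, eq_comm]

theorem card_wordGraph (f : ι → α) : #(wordGraph f) = Fintype.card ι := by
  classical
  rw [← agreement_self f, ← card_wordGraph_inter, inter_self]

theorem isCoverFree_image_wordGraph_map {V : Type*} [DecidableEq V] (e : ι × α ↪ V) {d : ℕ}
    {C : Finset (ι → α)}
    (hC : (C : Set (ι → α)).Pairwise fun f g ↦ d * agreement f g < Fintype.card ι) :
    IsCoverFree d (C.image fun f ↦ (wordGraph f).map e) := by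
  classical
  refine isCoverFree_of_mul_card_inter_lt ?_
  rw [coe_image]
  rintro _ ⟨f, hf, rfl⟩ _ ⟨g, hg, rfl⟩ hne
  rw [← map_inter, card_map, card_map, card_wordGraph_inter, card_wordGraph]
  exact hC hf hg (ne_of_apply_ne (fun f ↦ (wordGraph f).map e) hne)

end WordGraph

theorem exists_isCoverFree_exp_le_card (V : Type*) [Fintype V] [DecidableEq V] {d : ℕ}
    (hd : 1 ≤ d) :
    ∃ 𝓕 : Finset (Finset V), IsCoverFree d 𝓕 ∧
      Real.exp ((Fintype.card V / (4 * d) : ℕ) / (2 * d)) ≤ #𝓕 := by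
  set k := Fintype.card V / (4 * d)
  have : NeZero (4 * d) := ⟨by lia⟩
  have hd' : (1 : ℝ) ≤ d := by exact_mod_cast hd
  obtain ⟨e⟩ : Nonempty (Fin k × Fin (4 * d) ↪ V) := by
    apply Function.Embedding.nonempty_of_card_le
    simpa using Nat.div_mul_le_self (Fintype.card V) (4 * d)
  obtain ⟨C, hC, hcard⟩ := exists_code_agreement_lt (ι := Fin k) (α := Fin (4 * d))
    (t := k / d) (by simpa using div_le_self k.cast_nonneg hd')
  refine ⟨_, isCoverFree_image_wordGraph_map e (hC.imp fun f g hfg ↦ ?_), ?_⟩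
  · rw [lt_div_iff₀' (by positivity)] at hfg
    simpa using (by exact_mod_cast hfg : d * agreement f g < k)
  · have hinj : Function.Injective fun f : Fin k → Fin (4 * d) ↦ (wordGraph f).map e :=
      (map_injective e).comp wordGraph_injective
    have hexponent : (k : ℝ) / (2 * d) = k / d - 2 * k / (4 * d) := by field_simp; ring
    rw [card_image_of_injective _ hinj, hexponent]
    simpa using hcard

theorem half_mul_one_add_pow_le_exp {d : ℕ} (hd : 1 ≤ d) (n : ℕ) :
    (1 / 2 : ℝ) * (1 + 1 / (16 * (d : ℝ) ^ 2)) ^ n ≤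
      Real.exp ((n / (4 * d) : ℕ) / (2 * d)) := by
  set k := n / (4 * d)
  have hd' : (1 : ℝ) ≤ d := by exact_mod_cast hd
  have hn : (n : ℝ) ≤ 4 * d * (k + 1) := by
    exact_mod_cast (Nat.lt_mul_div_succ n (by lia : 0 < 4 * d)).le
  have hexponent : n * (1 / (16 * (d : ℝ) ^ 2)) ≤ k / (2 * d) + Real.log 2 := by
    calc (n : ℝ) * (1 / (16 * (d : ℝ) ^ 2))
        ≤ 4 * d * (k + 1) * (1 / (16 * (d : ℝ) ^ 2)) := by gcongr
      _ = (k : ℝ) / (2 * d) + (1 - k) / (4 * d) := by field_simp; ring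
      _ ≤ (k : ℝ) / (2 * d) + 1 / 4 := by
          gcongr _ + ?_
          apply div_le_div₀ <;> linarith [k.cast_nonneg (α := ℝ)]
      _ ≤ k / (2 * d) + Real.log 2 := by linarith [Real.log_two_gt_d9]
  calc (1 / 2 : ℝ) * (1 + 1 / (16 * (d : ℝ) ^ 2)) ^ n
      ≤ 1 / 2 * Real.exp (1 / (16 * (d : ℝ) ^ 2)) ^ n := by
        gcongr
        linarith [Real.add_one_le_exp (1 / (16 * (d : ℝ) ^ 2))]
    _ ≤ 1 / 2 * Real.exp (k / (2 * d) + Real.log 2) := by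
        rw [← Real.exp_nat_mul]
        gcongr
    _ = Real.exp (k / (2 * d)) := by
        rw [Real.exp_add, Real.exp_log two_pos]
        ring

theorem exists_dUnionFree_large_general (V : Type*) [Fintype V] [DecidableEq V] {d : ℕ}
    (hd : 1 ≤ d) :
    ∃ 𝓕 : Finset (Finset V), IsCoverFree d 𝓕 ∧
      (1 / 2 : ℝ) * (1 + 1 / (16 * (d : ℝ) ^ 2)) ^ Fintype.card V ≤ #𝓕 := by
  obtain ⟨𝓕, h𝓕, hcard⟩ := exists_isCoverFree_exp_le_card V hd
  exact ⟨𝓕, h𝓕, (half_mul_one_add_pow_le_exp hd _).trans hcard⟩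

/-- Hwang–T. Sós: for every `d ≥ 1` and `n ≥ 1` there is a `d`-union-free
family `𝓕` of subsets of `[n]` with `|𝓕| ≥ (1/2)·(1 + 1/(16 d²))^n`. -/
theorem exists_dUnionFree_large (d n : ℕ) (hd : 1 ≤ d) (hn : 1 ≤ n) :
    ∃ 𝓕 : Finset (Finset (Fin n)),
      (∀ G H : Fin d → Finset (Fin n),
        Function.Injective G → Function.Injective H →
        (∀ i, G i ∈ 𝓕) → (∀ i, H i ∈ 𝓕) →
        Finset.univ.sup G = Finset.univ.sup H →
        Finset.image G Finset.univ = Finset.image H Finset.univ) ∧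
      (1 / 2 : ℝ) * (1 + 1 / (16 * (d : ℝ) ^ 2)) ^ n ≤ (𝓕.card : ℝ) := by
  have : NeZero d := ⟨by lia⟩
  obtain ⟨𝓕, h𝓕, hcard⟩ := exists_dUnionFree_large_general (Fin n) hd
  exact ⟨𝓕, fun G H _ _ hG hH ↦ h𝓕.image_eq_image_of_sup_eq (by simp) (by simp) hG hH,
    by simpa using hcard⟩
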